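/- The stabilizer W_λ is the semidirect product of W_λ^0 by W_λ^1: W_λ^0 is a normal subgroup of W_λ, W_λ^1 is a subgroup of W_λ, W_λ^0 ∩ W_λ^1 = {1}, and every element w ∈ W_λ factors uniquely as w = u·v with u ∈ W_λ^0 and v ∈ W_λ^1. -/

import Mathlib

/-!
The stabilizer of `λ` acts by automorphisms on the root system `Ψ = Φ_λ⁰`, so it suffices to study
an arbitrary automorphism `w` of a root system `Ψ` with Weyl group `W₀`.

The invariant form `(x, y) = ∑ d ∈ Ψ, d(x) d(y)` factors `w`: if `u ∈ W₀` maximizes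
the product of `v` with `u w v`, then `u w v` lies in the chamber of `v`, for otherwise a reflection
would increase the product; hence `u w` preserves the positive roots.

Uniqueness says that `W₀` contains no other element than `1` preserving the positive roots. Call a
positive root `α` simple if `s_α` makes no positive root negative other than those proportional to
`α`. If `β` is not simple, there is a positive root `γ`, not proportional to `β`, with
`2 γ(v) ≤ γ(β^∨) β(v)`. Because `γ(β^∨) β(γ^∨) < 4`, the walls of `γ` and of `s_γ β` are then both
closer to `v` than the wall of `β`. As `s_β = s_γ s_{s_γ β} s_γ`, it follows by descent that the
simple reflections generate `W₀`.
By the exchange condition, a nonempty word of simple reflections that preserves the positive roots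
can be shortened, and so it represents `1`.
-/

open Module MulAction
open scoped Pointwise

section Group

variable {G : Type*} [Group G]

theorem exists_mem_pow_of_mem_closure {S : Set G} (hS : ∀ x ∈ S, x⁻¹ ∈ S) {g : G}
    (hg : g ∈ Subgroup.closure S) : ∃ n : ℕ, g ∈ S ^ n := by
  have hmul {x y : G} (hx : x ∈ S) (hy : ∃ n : ℕ, y ∈ S ^ n) : ∃ n : ℕ, x * y ∈ S ^ n :=
    hy.imp' Nat.succ fun n hn => pow_succ' S n ▸ Set.mul_mem_mul hx hn
  induction hg using Subgroup.closure_induction_left with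
  | one => exact ⟨0, Set.one_mem_one⟩
  | mul_left x hx y _ ih => exact hmul hx ih
  | inv_mul_cancel x hx y _ ih => exact hmul (hS x hx) ih

theorem existsUnique_mul_eq_mul_of_disjoint {H K : Subgroup G} (hHK : Disjoint H K) {a b : G}
    (ha : a ∈ H) (hb : b ∈ K) :
    ∃! p : G × G, p.1 ∈ H ∧ p.2 ∈ K ∧ a * b = p.1 * p.2 := by
  refine ⟨(a, b), ⟨ha, hb, rfl⟩, ?_⟩
  rintro ⟨c, d⟩ ⟨hc, hd, heq⟩
  have hpair : ((⟨c, hc⟩, ⟨d, hd⟩) : H × K) = (⟨a, ha⟩, ⟨b, hb⟩) :=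
    Subgroup.mul_injective_of_disjoint hHK heq.symm
  simp_all

end Group

section DualAction

variable {R M : Type*} [CommRing R] [AddCommGroup M] [Module R M]

/-- The contragredient action `w • β = β ∘ w⁻¹` of `Aut M` on the dual of `M`. -/
instance dualDistribMulAction : DistribMulAction (M ≃ₗ[R] M) (Dual R M) where
  smul w β := β.comp (w⁻¹ : M ≃ₗ[R] M).toLinearMap
  one_smul _ := rfl
  mul_smul _ _ _ := rfl
  smul_zero _ := rfl
  smul_add _ _ _ := rfl

theorem dual_smul_apply (w : M ≃ₗ[R] M) (β : Dual R M) (x : M) : (w • β) x = β (w⁻¹ x) := rfl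

theorem dual_smul_apply_apply (w : M ≃ₗ[R] M) (β : Dual R M) (x : M) : (w • β) (w x) = β x :=
  congrArg β (w.symm_apply_apply x)

end DualAction

section RootAut

variable {L : Type*} [AddCommGroup L]

/-- The automorphisms of `L` that permute the set `Φ` of roots, compatibly with the assignment of
coroots. -/
def rootAut (Φ : Set (Dual ℤ L)) (coroot : Dual ℤ L → L) : Subgroup (L ≃ₗ[ℤ] L) where
  carrier := {w | w • Φ = Φ ∧ ∀ β ∈ Φ, coroot (w • β) = w (coroot β)}
  one_mem' := ⟨one_smul _ _, fun _ _ => rfl⟩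
  mul_mem' := by
    rintro a b ⟨ha, ha'⟩ ⟨hb, hb'⟩
    refine ⟨by rw [mul_smul, hb, ha], fun β hβ => ?_⟩
    rw [mul_smul, ha' _ (hb ▸ Set.smul_mem_smul_set hβ), hb' β hβ, LinearEquiv.mul_apply]
  inv_mem' := by
    rintro a ⟨ha, ha'⟩
    refine ⟨inv_smul_eq_iff.mpr ha.symm, fun β hβ => ?_⟩
    have hmem : a⁻¹ • β ∈ Φ := Set.mem_smul_set_iff_inv_smul_mem.mp (ha.symm ▸ hβ)
    have h := ha' _ hmem
    rw [smul_inv_smul] at h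
    rw [h]
    exact (a.symm_apply_apply _).symm

variable {Φ : Set (Dual ℤ L)} {coroot : Dual ℤ L → L} {w : L ≃ₗ[ℤ] L} {β : Dual ℤ L}

theorem smul_mem_of_mem_rootAut (hw : w ∈ rootAut Φ coroot) (hβ : β ∈ Φ) : w • β ∈ Φ :=
  hw.1 ▸ Set.smul_mem_smul_set hβ

theorem coroot_smul (hw : w ∈ rootAut Φ coroot) (hβ : β ∈ Φ) : coroot (w • β) = w (coroot β) :=
  hw.2 β hβ

theorem mem_rootAut_of_forall (hΦ : Φ.Finite)
    (h : ∀ β ∈ Φ, w • β ∈ Φ ∧ coroot (w • β) = w (coroot β)) : w ∈ rootAut Φ coroot :=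
  ⟨(mem_stabilizer_set_iff_smul_set_subset hΦ).mpr
    (Set.smul_set_subset_iff.mpr fun β hβ => (h β hβ).1), fun β hβ => (h β hβ).2⟩

end RootAut

theorem eq_reflection_of_forall_apply {R M : Type*} [CommRing R] [AddCommGroup M] [Module R M]
    {f : Dual R M} {x : M} (hfx : f x = 2) {w : M ≃ₗ[R] M} (hw : ∀ y, w y = y - f y • x) :
    w = Module.reflection hfx :=
  LinearEquiv.ext fun y => by rw [hw, Module.reflection_apply]

/-- `Φ` is a finite crystallographic root system in the dual of the abelian group `L`, not
necessarily reduced or spanning. The coroots are values in `L` and the reflections automorphisms of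
`L`; both are given by functions whose values outside `Φ` are irrelevant. -/
structure IsRootDatum {L : Type*} [AddCommGroup L] (Φ : Set (Dual ℤ L)) (coroot : Dual ℤ L → L)
    (s : Dual ℤ L → (L ≃ₗ[ℤ] L)) : Prop where
  finite : Φ.Finite
  root_coroot_two : ∀ α ∈ Φ, α (coroot α) = 2
  reflection_apply : ∀ α ∈ Φ, ∀ x, s α x = x - α x • coroot α
  reflection_mem_rootAut : ∀ α ∈ Φ, s α ∈ rootAut Φ coroot

theorem isRootDatum_of_comp_mem {L : Type*} [AddCommGroup L] {Φ : Set (Dual ℤ L)}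
    {coroot : Dual ℤ L → L} {s : Dual ℤ L → (L ≃ₗ[ℤ] L)} (hfin : Φ.Finite)
    (hcoroot : ∀ α ∈ Φ, α (coroot α) = 2) (hs : ∀ α ∈ Φ, ∀ x, s α x = x - α x • coroot α)
    (hmaps : ∀ α ∈ Φ, ∀ β ∈ Φ, β.comp (s α).toLinearMap ∈ Φ)
    (hconj : ∀ α ∈ Φ, ∀ β ∈ Φ, coroot (s α • β) = s α (coroot β)) : IsRootDatum Φ coroot s where
  finite := hfin
  root_coroot_two := hcoroot
  reflection_apply := hs
  reflection_mem_rootAut α hα := by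
    have hinv : (s α)⁻¹ = s α := by
      rw [eq_reflection_of_forall_apply (hcoroot α hα) (hs α hα), Module.reflection_inv]
    have hsmul (β : Dual ℤ L) : s α • β = β.comp (s α).toLinearMap :=
      congrArg (fun w : L ≃ₗ[ℤ] L => β.comp w.toLinearMap) hinv
    exact mem_rootAut_of_forall hfin fun β hβ => ⟨hsmul β ▸ hmaps α hα β hβ, hconj α hα β hβ⟩

/-- The form `(x, y) ↦ ∑ d ∈ Φ, d x * d y` on `L`, viewed as a map from `L` to its dual. -/
noncomputable def rootForm {L : Type*} [AddCommGroup L] {Φ : Set (Dual ℤ L)} (hΦ : Φ.Finite) :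
    L →ₗ[ℤ] Dual ℤ L :=
  ∑ d ∈ hΦ.toFinset, d.smulRight d

section RootForm

variable {L : Type*} [AddCommGroup L] {Φ : Set (Dual ℤ L)} (hΦ : Φ.Finite)

theorem rootForm_eq_sum (x : L) : rootForm hΦ x = ∑ d ∈ hΦ.toFinset, d x • d := by
  simp [rootForm]

theorem rootForm_apply (x y : L) : rootForm hΦ x y = ∑ d ∈ hΦ.toFinset, d x * d y := by
  simp [rootForm]

theorem rootForm_comm (x y : L) : rootForm hΦ x y = rootForm hΦ y x := by
  simp only [rootForm_apply, mul_comm]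

theorem rootForm_sq_le (x y : L) :
    rootForm hΦ x y ^ 2 ≤ rootForm hΦ x x * rootForm hΦ y y := by
  simpa only [rootForm_apply, ← sq] using
    Finset.sum_mul_sq_le_sq_mul_sq hΦ.toFinset (fun d => d x) fun d => d y

theorem rootForm_self_pos {x : L} {α : Dual ℤ L} (hα : α ∈ Φ) (hx : α x ≠ 0) :
    0 < rootForm hΦ x x := by
  rw [rootForm_apply]
  exact Finset.sum_pos' (fun d _ => mul_self_nonneg _)
    ⟨α, hΦ.mem_toFinset.mpr hα, mul_self_pos.mpr hx⟩

theorem rootForm_map {w : L ≃ₗ[ℤ] L} (hw : w • Φ = Φ) (x : L) :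
    rootForm hΦ (w x) = w • rootForm hΦ x := by
  have hmem : ∀ d, d ∈ hΦ.toFinset ↔ w • d ∈ hΦ.toFinset := fun d => by
    rw [hΦ.mem_toFinset, hΦ.mem_toFinset, ← Set.smul_mem_smul_set_iff (a := w), hw]
  rw [rootForm_eq_sum, rootForm_eq_sum, Finset.smul_sum]
  refine (Finset.sum_equiv (MulAction.toPerm w) hmem fun d _ => ?_).symm
  rw [MulAction.toPerm_apply, dual_smul_apply_apply, smul_comm]

end RootForm

/-- The roots in `Φ` on which the additive functional `v` is positive. -/
def positiveRoots {L 𝕜 : Type*} [AddCommGroup L] [CommRing 𝕜] [LinearOrder 𝕜]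
    (Φ : Set (Dual ℤ L)) (v : Dual ℤ L →ₗ[ℤ] 𝕜) : Set (Dual ℤ L) :=
  {α ∈ Φ | 0 < v α}

/-- The scalar product `∑ d ∈ Φ, d(v) * d(g v)` of a vector `v` with its translate `g v`, where
`d(g v) = (g⁻¹ • d)(v)` and vectors are encoded as functionals on the dual of `L`. -/
noncomputable def rootCorrelation {L 𝕜 : Type*} [AddCommGroup L] [CommRing 𝕜]
    {Φ : Set (Dual ℤ L)} (hΦ : Φ.Finite) (v : Dual ℤ L →ₗ[ℤ] 𝕜) (g : L ≃ₗ[ℤ] L) : 𝕜 :=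
  ∑ d ∈ hΦ.toFinset, v d * v (g⁻¹ • d)

theorem finite_image_rootCorrelation {L 𝕜 : Type*} [AddCommGroup L] [CommRing 𝕜]
    {Φ : Set (Dual ℤ L)} (hΦ : Φ.Finite) (v : Dual ℤ L →ₗ[ℤ] 𝕜) :
    (rootCorrelation hΦ v '' {g | g • Φ = Φ}).Finite := by
  refine (Set.finite_range fun f : hΦ.toFinset → hΦ.toFinset =>
    ∑ d : hΦ.toFinset, v d * v (f d)).subset ?_
  rintro _ ⟨g, hg, rfl⟩
  have hmem (d : hΦ.toFinset) : g⁻¹ • d.1 ∈ hΦ.toFinset := by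
    rw [hΦ.mem_toFinset, ← Set.mem_smul_set_iff_inv_smul_mem, hg]
    exact hΦ.mem_toFinset.mp d.2
  exact ⟨fun d => ⟨g⁻¹ • d.1, hmem d⟩,
    Finset.sum_coe_sort hΦ.toFinset fun d => v d * v (g⁻¹ • d)⟩

/-- The positive roots `α` whose reflection makes no positive root negative except those with the
same reflection as `α`. In a reduced root system these are the indecomposable positive roots. -/
def simpleRoots {L 𝕜 : Type*} [AddCommGroup L] [CommRing 𝕜] [LinearOrder 𝕜]
    (Φ : Set (Dual ℤ L)) (s : Dual ℤ L → (L ≃ₗ[ℤ] L)) (v : Dual ℤ L →ₗ[ℤ] 𝕜) :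
    Set (Dual ℤ L) :=
  {α ∈ positiveRoots Φ v | ∀ β ∈ positiveRoots Φ v, s α • β ∉ positiveRoots Φ v → s β = s α}

/-- Four times the squared distance, with respect to `rootForm`, from `v` to the wall of the root
`β`; the formula comes from `β(v) = 2 (β^∨, v) / (β^∨, β^∨)`. -/
noncomputable def wallDistSq {L 𝕜 : Type*} [AddCommGroup L] [CommRing 𝕜] {Φ : Set (Dual ℤ L)}
    (hΦ : Φ.Finite) (coroot : Dual ℤ L → L) (v : Dual ℤ L →ₗ[ℤ] 𝕜) (β : Dual ℤ L) : 𝕜 :=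
  rootForm hΦ (coroot β) (coroot β) * v β ^ 2

namespace IsRootDatum

variable {L : Type*} [AddCommGroup L] {Φ : Set (Dual ℤ L)} {coroot : Dual ℤ L → L}
  {s : Dual ℤ L → (L ≃ₗ[ℤ] L)} {α β γ : Dual ℤ L}

section Reflections

variable (h : IsRootDatum Φ coroot s)
include h

theorem reflection_eq (hα : α ∈ Φ) : s α = Module.reflection (h.root_coroot_two α hα) :=
  eq_reflection_of_forall_apply _ (h.reflection_apply α hα)

theorem reflection_inv (hα : α ∈ Φ) : (s α)⁻¹ = s α := by
  rw [h.reflection_eq hα, Module.reflection_inv]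

theorem reflection_mul_self (hα : α ∈ Φ) : s α * s α = 1 := by
  nth_rw 1 [← h.reflection_inv hα]
  exact inv_mul_cancel _

theorem reflection_smul (hα : α ∈ Φ) (β : Dual ℤ L) : s α • β = β - β (coroot α) • α := by
  ext x
  rw [dual_smul_apply, h.reflection_inv hα, h.reflection_apply α hα]
  simp [mul_comm]

theorem reflection_smul_self (hα : α ∈ Φ) : s α • α = -α := by
  rw [h.reflection_smul hα, h.root_coroot_two α hα]
  module

theorem reflection_coroot_self (hα : α ∈ Φ) : s α (coroot α) = -coroot α := by
  rw [h.reflection_apply α hα, h.root_coroot_two α hα]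
  module

theorem reflection_smul_mem (hα : α ∈ Φ) (hβ : β ∈ Φ) : s α • β ∈ Φ :=
  smul_mem_of_mem_rootAut (h.reflection_mem_rootAut α hα) hβ

theorem neg_mem (hα : α ∈ Φ) : -α ∈ Φ :=
  h.reflection_smul_self hα ▸ h.reflection_smul_mem hα hα

theorem reflection_smul_root {w : L ≃ₗ[ℤ] L} (hw : w ∈ rootAut Φ coroot) (hα : α ∈ Φ) :
    s (w • α) = w * s α * w⁻¹ := by
  ext x
  rw [h.reflection_apply _ (smul_mem_of_mem_rootAut hw hα), coroot_smul hw hα,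
    LinearEquiv.mul_apply, LinearEquiv.mul_apply, h.reflection_apply α hα, map_sub, map_smul,
    dual_smul_apply]
  congr 1
  exact (w.apply_symm_apply x).symm

theorem reflection_neg (hα : α ∈ Φ) : s (-α) = s α := by
  rw [← h.reflection_smul_self hα, h.reflection_smul_root (h.reflection_mem_rootAut α hα) hα,
    mul_inv_cancel_right]

theorem closure_reflections_le_rootAut : Subgroup.closure (s '' Φ) ≤ rootAut Φ coroot :=
  (Subgroup.closure_le _).mpr (Set.image_subset_iff.mpr h.reflection_mem_rootAut)

theorem rootAut_le_normalizer :
    rootAut Φ coroot ≤ Subgroup.normalizer (Subgroup.closure (s '' Φ)) := by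
  rw [Subgroup.le_normalizer_closure_iff]
  rintro w hw _ ⟨α, hα, rfl⟩
  rw [← h.reflection_smul_root hw hα]
  exact Subgroup.subset_closure ⟨_, smul_mem_of_mem_rootAut hw hα, rfl⟩

end Reflections

section Pairings

variable (h : IsRootDatum Φ coroot s)
include h

theorem rootForm_coroot_self_pos (hα : α ∈ Φ) :
    0 < rootForm h.finite (coroot α) (coroot α) :=
  rootForm_self_pos h.finite hα (by rw [h.root_coroot_two α hα]; exact two_ne_zero)

theorem rootForm_coroot_smul_self {w : L ≃ₗ[ℤ] L} (hw : w ∈ rootAut Φ coroot) (hα : α ∈ Φ) :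
    rootForm h.finite (coroot (w • α)) (coroot (w • α)) =
      rootForm h.finite (coroot α) (coroot α) := by
  rw [coroot_smul hw hα, rootForm_map h.finite hw.1, dual_smul_apply_apply]

-- `s α` negates `coroot α`, hence also the functional that the form attaches to it.
theorem two_smul_rootForm_coroot (hα : α ∈ Φ) :
    (2 : ℤ) • rootForm h.finite (coroot α) = rootForm h.finite (coroot α) (coroot α) • α := by
  have hneg := rootForm_map h.finite (h.reflection_mem_rootAut α hα).1 (coroot α)
  rw [h.reflection_coroot_self hα, map_neg, h.reflection_smul hα] at hneg
  rw [two_smul]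
  exact (neg_add_eq_iff_eq_add.mp (eq_sub_iff_add_eq.mp hneg)).symm

theorem two_mul_rootForm_coroot (hα : α ∈ Φ) (x : L) :
    2 * rootForm h.finite (coroot α) x = rootForm h.finite (coroot α) (coroot α) * α x :=
  LinearMap.congr_fun (h.two_smul_rootForm_coroot hα) x

theorem rootForm_mul_pairing_comm (hα : α ∈ Φ) (hβ : β ∈ Φ) :
    rootForm h.finite (coroot α) (coroot α) * α (coroot β) =
      rootForm h.finite (coroot β) (coroot β) * β (coroot α) := by
  rw [← h.two_mul_rootForm_coroot hα, ← h.two_mul_rootForm_coroot hβ, rootForm_comm]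

theorem pairing_pos_of_pairing_pos (hα : α ∈ Φ) (hβ : β ∈ Φ) (hpos : 0 < α (coroot β)) :
    0 < β (coroot α) := by
  refine pos_of_mul_pos_right ?_ (h.rootForm_coroot_self_pos hβ).le
  rw [← h.rootForm_mul_pairing_comm hα hβ]
  exact mul_pos (h.rootForm_coroot_self_pos hα) hpos

theorem pairing_mul_pairing_le_four (hα : α ∈ Φ) (hβ : β ∈ Φ) :
    α (coroot β) * β (coroot α) ≤ 4 := by
  set a := rootForm h.finite (coroot α) (coroot α)
  set b := rootForm h.finite (coroot β) (coroot β)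
  have hab : 0 < a * b :=
    mul_pos (h.rootForm_coroot_self_pos hα) (h.rootForm_coroot_self_pos hβ)
  have hαβ := h.two_mul_rootForm_coroot hα (coroot β)
  have hβα := h.two_mul_rootForm_coroot hβ (coroot α)
  rw [rootForm_comm] at hβα
  have hcs := rootForm_sq_le h.finite (coroot α) (coroot β)
  refine le_of_mul_le_mul_left ?_ hab
  calc a * b * (α (coroot β) * β (coroot α))
      = (a * α (coroot β)) * (b * β (coroot α)) := by ring
    _ = 4 * rootForm h.finite (coroot α) (coroot β) ^ 2 := by rw [← hαβ, ← hβα]; ring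
    _ ≤ a * b * 4 := by linarith

variable [IsAddTorsionFree L]

-- Otherwise `s α * s β` would be a nontrivial shear, moving `coroot β` to infinitely many coroots.
theorem pairing_smul_coroot_of_mul_eq_four (hα : α ∈ Φ) (hβ : β ∈ Φ)
    (h4 : α (coroot β) * β (coroot α) = 4) :
    α (coroot β) • coroot α = (2 : ℤ) • coroot β := by
  by_contra hne
  refine (infinite_range_reflection_reflection_iterate_iff (h.root_coroot_two α hα)
    (h.root_coroot_two β hβ) h4).mpr hne ((h.finite.image coroot).subset ?_)
  rw [← h.reflection_eq hα, ← h.reflection_eq hβ]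
  rintro _ ⟨n, rfl⟩
  have hmem : (s α * s β) ^ n ∈ rootAut Φ coroot :=
    pow_mem (mul_mem (h.reflection_mem_rootAut α hα) (h.reflection_mem_rootAut β hβ)) n
  refine ⟨(s α * s β) ^ n • β, smul_mem_of_mem_rootAut hmem hβ, ?_⟩
  rw [coroot_smul hmem hβ, LinearEquiv.coe_pow]
  rfl

theorem reflection_eq_of_pairing_mul_eq_four (hα : α ∈ Φ) (hβ : β ∈ Φ)
    (h4 : α (coroot β) * β (coroot α) = 4) : s α = s β := by
  have hcoroot := h.pairing_smul_coroot_of_mul_eq_four hα hβ h4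
  have hroot (x : L) : 2 * α x = α (coroot β) * β x := by
    have hform := LinearMap.congr_fun (congrArg (rootForm h.finite) hcoroot) x
    simp only [map_smul, LinearMap.smul_apply, smul_eq_mul] at hform
    have hcomm := h.rootForm_mul_pairing_comm hα hβ
    have hα' := h.two_mul_rootForm_coroot hα x
    have hβ' := h.two_mul_rootForm_coroot hβ x
    set m := α (coroot β)
    set b := rootForm h.finite (coroot β) (coroot β)
    refine mul_left_cancel₀ (mul_pos two_pos (h.rootForm_coroot_self_pos hβ)).ne' ?_
    linear_combination
      -b * α x * h4 + m * (2 * hform + 2 * hβ' - α x * hcomm - m * hα')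
  ext x
  rw [h.reflection_apply α hα, h.reflection_apply β hβ, sub_right_inj]
  refine smul_right_injective L (two_ne_zero (α := ℤ)) ?_
  simp only [smul_smul, hroot]
  rw [mul_comm, mul_smul, hcoroot, smul_smul, mul_comm]

theorem pairing_mul_pairing_lt_four (hα : α ∈ Φ) (hβ : β ∈ Φ) (hne : s α ≠ s β) :
    α (coroot β) * β (coroot α) < 4 :=
  (h.pairing_mul_pairing_le_four hα hβ).lt_of_ne fun h4 =>
    hne (h.reflection_eq_of_pairing_mul_eq_four hα hβ h4)

end Pairings

section PositiveRoots

variable {𝕜 : Type*} [CommRing 𝕜] [LinearOrder 𝕜] [IsStrictOrderedRing 𝕜] {v : Dual ℤ L →ₗ[ℤ] 𝕜}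

theorem neg_notMem_positiveRoots (hα : α ∈ positiveRoots Φ v) : -α ∉ positiveRoots Φ v := by
  intro hneg
  have hlt := hneg.2
  rw [map_neg, Left.neg_pos_iff] at hlt
  exact hlt.asymm hα.2

variable (h : IsRootDatum Φ coroot s) (hv : ∀ α ∈ Φ, v α ≠ 0)
include h hv

theorem neg_mem_positiveRoots (hα : α ∈ Φ) (hneg : α ∉ positiveRoots Φ v) :
    -α ∈ positiveRoots Φ v := by
  refine ⟨h.neg_mem hα, ?_⟩
  rw [map_neg, Left.neg_pos_iff]
  exact (hv α hα).lt_of_le (not_lt.mp fun hpos => hneg ⟨hα, hpos⟩)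

end PositiveRoots

section Transitivity

variable {𝕜 : Type*} [CommRing 𝕜] {v : Dual ℤ L →ₗ[ℤ] 𝕜} (h : IsRootDatum Φ coroot s)
include h

theorem rootCorrelation_reflection_mul (hα : α ∈ Φ) (g : L ≃ₗ[ℤ] L) :
    rootCorrelation h.finite v (s α * g) =
      rootCorrelation h.finite v g - v (rootForm h.finite (coroot α)) * v (g⁻¹ • α) := by
  rw [rootForm_eq_sum, map_sum, Finset.sum_mul, rootCorrelation, rootCorrelation,
    ← Finset.sum_sub_distrib]
  refine Finset.sum_congr rfl fun d _ => ?_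
  rw [mul_inv_rev, h.reflection_inv hα, mul_smul, h.reflection_smul hα, smul_sub, map_sub,
    smul_comm, map_smul v (d (coroot α)), map_smul v (d (coroot α)), mul_sub, mul_smul_comm,
    smul_mul_assoc]

variable [LinearOrder 𝕜] [IsStrictOrderedRing 𝕜]

theorem map_rootForm_coroot_pos (hα : α ∈ positiveRoots Φ v) :
    0 < v (rootForm h.finite (coroot α)) := by
  have hsmul := congrArg v (h.two_smul_rootForm_coroot hα.1)
  have hpos := zsmul_pos hα.2 (h.rootForm_coroot_self_pos hα.1)
  rw [map_smul, map_smul, two_smul] at hsmul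
  linarith

-- Choose `u` so that the translate `(u * w) v` is as close as possible to `v`.
theorem exists_mul_mem_stabilizer_positiveRoots (hv : ∀ α ∈ Φ, v α ≠ 0) {w : L ≃ₗ[ℤ] L}
    (hw : w ∈ rootAut Φ coroot) :
    ∃ u ∈ Subgroup.closure (s '' Φ), u * w ∈ stabilizer (L ≃ₗ[ℤ] L) (positiveRoots Φ v) := by
  have hmul {u : L ≃ₗ[ℤ] L} (hu : u ∈ Subgroup.closure (s '' Φ)) : u * w ∈ rootAut Φ coroot :=
    mul_mem (h.closure_reflections_le_rootAut hu) hw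
  have hfinite : ((fun u => rootCorrelation h.finite v (u * w)) ''
      (Subgroup.closure (s '' Φ) : Set (L ≃ₗ[ℤ] L))).Finite :=
    (finite_image_rootCorrelation h.finite v).subset <| by
      rintro _ ⟨u, hu, rfl⟩
      exact ⟨u * w, (hmul hu).1, rfl⟩
  obtain ⟨u, hu, hmax⟩ := hfinite.exists_maximalFor' _ _ ⟨1, one_mem _⟩
  refine ⟨u, hu, (mem_stabilizer_set_iff_subset_smul_set (h.finite.subset (Set.sep_subset _ _))).mpr
    fun α hα => Set.mem_smul_set_iff_inv_smul_mem.mpr ?_⟩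
  have hmem := smul_mem_of_mem_rootAut (inv_mem (hmul hu)) hα.1
  refine ⟨hmem, (hv _ hmem).symm.lt_of_le (not_lt.mp fun hneg => ?_)⟩
  have hlt : rootCorrelation h.finite v (u * w) < rootCorrelation h.finite v (s α * u * w) := by
    rw [mul_assoc, h.rootCorrelation_reflection_mul hα.1]
    linarith [mul_neg_of_pos_of_neg (h.map_rootForm_coroot_pos hα) hneg]
  exact hlt.not_ge
    (hmax (mul_mem (Subgroup.subset_closure (Set.mem_image_of_mem s hα.1)) hu) hlt.le)

end Transitivity

section SimpleRoots

variable {𝕜 : Type*} [CommRing 𝕜] {v : Dual ℤ L →ₗ[ℤ] 𝕜} (h : IsRootDatum Φ coroot s)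
include h

theorem wallDistSq_neg (hβ : β ∈ Φ) :
    wallDistSq h.finite coroot v (-β) = wallDistSq h.finite coroot v β := by
  have hnorm := h.rootForm_coroot_smul_self (h.reflection_mem_rootAut β hβ) hβ
  rw [h.reflection_smul_self hβ] at hnorm
  rw [wallDistSq, wallDistSq, hnorm, map_neg, neg_sq]

variable [LinearOrder 𝕜] [IsStrictOrderedRing 𝕜]

theorem exists_two_mul_le_of_notMem_simpleRoots (hv : ∀ α ∈ Φ, v α ≠ 0)
    (hβ : β ∈ positiveRoots Φ v) (hβs : β ∉ simpleRoots Φ s v) :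
    ∃ γ ∈ positiveRoots Φ v, s γ ≠ s β ∧ 2 * v γ ≤ (γ (coroot β) : 𝕜) * v β := by
  have hexists : ∃ γ ∈ positiveRoots Φ v, s β • γ ∉ positiveRoots Φ v ∧ s γ ≠ s β := by
    by_contra! hall
    exact hβs ⟨hβ, hall⟩
  obtain ⟨γ, hγ, hsγ, hne⟩ := hexists
  have hmem := h.reflection_smul_mem hβ.1 hγ.1
  have hδ : -(s β • γ) ∈ positiveRoots Φ v := h.neg_mem_positiveRoots hv hmem hsγ
  have hneδ : s (-(s β • γ)) ≠ s β := by
    rw [h.reflection_neg hmem, h.reflection_smul_root (h.reflection_mem_rootAut β hβ.1) hγ.1]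
    rwa [ne_eq, mul_inv_eq_iff_eq_mul, mul_left_cancel_iff]
  have hpair : (-(s β • γ)) (coroot β) = γ (coroot β) := by
    rw [h.reflection_smul hβ.1]
    simp only [LinearMap.neg_apply, LinearMap.sub_apply, LinearMap.smul_apply, smul_eq_mul,
      h.root_coroot_two β hβ.1]
    ring
  have hsum : v (-(s β • γ)) = (γ (coroot β) : 𝕜) * v β - v γ := by
    rw [h.reflection_smul hβ.1, neg_sub, map_sub, map_smul, zsmul_eq_mul]
  rcases le_total (v γ) (v (-(s β • γ))) with hle | hle
  · exact ⟨γ, hγ, hne, by linarith⟩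
  · exact ⟨_, hδ, hneδ, by rw [hpair]; linarith⟩

variable [IsAddTorsionFree L]

theorem wallDistSq_lt (hβ : β ∈ positiveRoots Φ v) (hγ : γ ∈ positiveRoots Φ v)
    (hne : s γ ≠ s β) (hle : 2 * v γ ≤ (γ (coroot β) : 𝕜) * v β) :
    wallDistSq h.finite coroot v γ < wallDistSq h.finite coroot v β := by
  have hlt := h.pairing_mul_pairing_lt_four hγ.1 hβ.1 hne
  have hcomm := h.rootForm_mul_pairing_comm hγ.1 hβ.1
  have hb := h.rootForm_coroot_self_pos hβ.1
  have hc := h.rootForm_coroot_self_pos hγ.1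
  rw [wallDistSq, wallDistSq]
  set n := γ (coroot β)
  set m := β (coroot γ)
  set b := rootForm h.finite (coroot β) (coroot β)
  set c := rootForm h.finite (coroot γ) (coroot γ)
  refine lt_of_mul_lt_mul_left ?_ (zero_le_four (α := 𝕜))
  calc (4 : 𝕜) * (c * v γ ^ 2)
      = c * (2 * v γ) ^ 2 := by ring
    _ ≤ c * (n * v β) ^ 2 := by
        have := hγ.2
        gcongr
    _ = (c * n : ℤ) * n * v β ^ 2 := by push_cast; ring
    _ = (n * m : ℤ) * (b * v β ^ 2) := by rw [hcomm]; push_cast; ring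
    _ < 4 * (b * v β ^ 2) := by
        have hpos : 0 < (b : 𝕜) * v β ^ 2 := mul_pos (Int.cast_pos.mpr hb) (pow_pos hβ.2 2)
        gcongr
        exact_mod_cast hlt

theorem wallDistSq_reflection_smul_lt (hβ : β ∈ positiveRoots Φ v)
    (hγ : γ ∈ positiveRoots Φ v) (hne : s γ ≠ s β)
    (hle : 2 * v γ ≤ (γ (coroot β) : 𝕜) * v β) :
    wallDistSq h.finite coroot v (s γ • β) < wallDistSq h.finite coroot v β := by
  have hlt := h.pairing_mul_pairing_lt_four hγ.1 hβ.1 hne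
  have hn : (0 : 𝕜) < γ (coroot β) :=
    pos_of_mul_pos_left ((mul_pos two_pos hγ.2).trans_le hle) hβ.2.le
  have hm := h.pairing_pos_of_pairing_pos hγ.1 hβ.1 (Int.cast_pos.mp hn)
  rw [wallDistSq, wallDistSq,
    h.rootForm_coroot_smul_self (h.reflection_mem_rootAut γ hγ.1) hβ.1,
    h.reflection_smul hγ.1, map_sub, map_smul, zsmul_eq_mul]
  have hm' : (0 : 𝕜) < β (coroot γ) := Int.cast_pos.mpr hm
  have hlt' : (γ (coroot β) : 𝕜) * β (coroot γ) < 4 := by exact_mod_cast hlt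
  have hpos : (0 : 𝕜) < β (coroot γ) * v γ := mul_pos hm' hγ.2
  have hsmall : (β (coroot γ) : 𝕜) * v γ < 2 * v β := by
    nlinarith [mul_le_mul_of_nonneg_left hle hm'.le, mul_lt_mul_of_pos_right hlt' hβ.2]
  refine mul_lt_mul_of_pos_left ?_ (Int.cast_pos.mpr (h.rootForm_coroot_self_pos hβ.1))
  exact sq_lt_sq' (by linarith) (by linarith)

theorem exists_reflection_eq_mul_of_notMem_simpleRoots (hv : ∀ α ∈ Φ, v α ≠ 0)
    (hβ : β ∈ positiveRoots Φ v) (hβs : β ∉ simpleRoots Φ s v) :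
    ∃ γ ∈ positiveRoots Φ v, ∃ δ ∈ positiveRoots Φ v,
      wallDistSq h.finite coroot v γ < wallDistSq h.finite coroot v β ∧
      wallDistSq h.finite coroot v δ < wallDistSq h.finite coroot v β ∧
      s β = s γ * s δ * s γ := by
  obtain ⟨γ, hγ, hne, hle⟩ := h.exists_two_mul_le_of_notMem_simpleRoots hv hβ hβs
  have hmem := h.reflection_smul_mem hγ.1 hβ.1
  have hlt := h.wallDistSq_reflection_smul_lt hβ hγ hne hle
  have hconj : s β = s γ * s (s γ • β) * s γ := by
    rw [h.reflection_smul_root (h.reflection_mem_rootAut γ hγ.1) hβ.1, h.reflection_inv hγ.1,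
      mul_assoc, mul_assoc, h.reflection_mul_self hγ.1, mul_one, ← mul_assoc,
      h.reflection_mul_self hγ.1, one_mul]
  refine ⟨γ, hγ, ?_⟩
  by_cases hpos : s γ • β ∈ positiveRoots Φ v
  · exact ⟨_, hpos, h.wallDistSq_lt hβ hγ hne hle, hlt, hconj⟩
  · refine ⟨_, h.neg_mem_positiveRoots hv hmem hpos, h.wallDistSq_lt hβ hγ hne hle, ?_, ?_⟩
    · rwa [h.wallDistSq_neg hmem]
    · rwa [h.reflection_neg hmem]

theorem reflection_mem_closure_simpleRoots (hv : ∀ α ∈ Φ, v α ≠ 0)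
    (hβ : β ∈ positiveRoots Φ v) : s β ∈ Subgroup.closure (s '' simpleRoots Φ s v) := by
  by_contra hβs
  obtain ⟨β, ⟨hβ, hβs⟩, hmin⟩ := Set.exists_min_image
    {β ∈ positiveRoots Φ v | s β ∉ Subgroup.closure (s '' simpleRoots Φ s v)}
    (wallDistSq h.finite coroot v) (h.finite.subset fun _ hα => hα.1.1) ⟨β, hβ, hβs⟩
  have hlower {γ : Dual ℤ L} (hγ : γ ∈ positiveRoots Φ v)
      (hlt : wallDistSq h.finite coroot v γ < wallDistSq h.finite coroot v β) :
      s γ ∈ Subgroup.closure (s '' simpleRoots Φ s v) :=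
    by_contra fun hγs => (hmin γ ⟨hγ, hγs⟩).not_gt hlt
  obtain ⟨γ, hγ, δ, hδ, hγβ, hδβ, hconj⟩ := h.exists_reflection_eq_mul_of_notMem_simpleRoots hv hβ
    fun hsimple => hβs (Subgroup.subset_closure (Set.mem_image_of_mem s hsimple))
  rw [hconj] at hβs
  exact hβs (mul_mem (mul_mem (hlower hγ hγβ) (hlower hδ hδβ)) (hlower hγ hγβ))

theorem closure_reflections_eq_closure_simpleRoots (hv : ∀ α ∈ Φ, v α ≠ 0) :
    Subgroup.closure (s '' Φ) = Subgroup.closure (s '' simpleRoots Φ s v) := by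
  refine le_antisymm ((Subgroup.closure_le _).mpr ?_)
    (Subgroup.closure_mono (Set.image_mono fun _ hα => hα.1.1))
  rintro _ ⟨α, hα, rfl⟩
  by_cases hpos : α ∈ positiveRoots Φ v
  · exact h.reflection_mem_closure_simpleRoots hv hpos
  · rw [← h.reflection_neg hα]
    exact h.reflection_mem_closure_simpleRoots hv (h.neg_mem_positiveRoots hv hα hpos)

end SimpleRoots

section Exchange

variable {𝕜 : Type*} [CommRing 𝕜] [LinearOrder 𝕜] {v : Dual ℤ L →ₗ[ℤ] 𝕜}
  (h : IsRootDatum Φ coroot s) {n : ℕ} {g : L ≃ₗ[ℤ] L}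
include h

theorem mem_rootAut_of_mem_pow (hg : g ∈ (s '' simpleRoots Φ s v) ^ n) : g ∈ rootAut Φ coroot :=
  Subgroup.pow_subset (Set.image_subset_iff.mpr fun α hα => h.reflection_mem_rootAut α hα.1.1) hg

theorem exists_mul_reflection_mem_pow (hα : α ∈ positiveRoots Φ v)
    (hg : g ∈ (s '' simpleRoots Φ s v) ^ n) (hgα : g • α ∉ positiveRoots Φ v) :
    ∃ m < n, g * s α ∈ (s '' simpleRoots Φ s v) ^ m := by
  induction n generalizing g with
  | zero =>
    rw [pow_zero, Set.mem_one] at hg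
    exact absurd hα (by rwa [hg, one_smul] at hgα)
  | succ n ih =>
    rw [pow_succ'] at hg
    obtain ⟨_, ⟨β, hβ, rfl⟩, g, hg, rfl⟩ := hg
    by_cases hpos : g • α ∈ positiveRoots Φ v
    · refine ⟨n, n.lt_succ_self, ?_⟩
      have hconj : g * s α * g⁻¹ = s β := by
        rw [← h.reflection_smul_root (h.mem_rootAut_of_mem_pow hg) hα.1]
        exact hβ.2 _ hpos (by rwa [smul_smul])
      rw [mul_inv_eq_iff_eq_mul] at hconj
      rwa [mul_assoc, hconj, ← mul_assoc, h.reflection_mul_self hβ.1.1, one_mul]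
    · obtain ⟨m, hm, hmem⟩ := ih hg hpos
      refine ⟨m + 1, Nat.succ_lt_succ hm, ?_⟩
      rw [mul_assoc, pow_succ']
      exact Set.mul_mem_mul (Set.mem_image_of_mem s hβ) hmem

variable [IsStrictOrderedRing 𝕜]

theorem eq_one_of_mem_pow_of_forall_smul_mem (hg : g ∈ (s '' simpleRoots Φ s v) ^ n)
    (hpos : ∀ α ∈ positiveRoots Φ v, g • α ∈ positiveRoots Φ v) : g = 1 := by
  induction n using Nat.strong_induction_on with
  | _ n ih =>
    rcases n with _ | n
    · rwa [pow_zero, Set.mem_one] at hg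
    · have hg' := hg
      rw [pow_succ] at hg'
      obtain ⟨w, hw, _, ⟨α, hα, rfl⟩, hwα⟩ := hg'
      have hneg : w • α ∉ positiveRoots Φ v := fun hmem => by
        have := hpos α hα.1
        rw [← hwα, mul_smul, h.reflection_smul_self hα.1.1, smul_neg] at this
        exact neg_notMem_positiveRoots hmem this
      obtain ⟨m, hm, hmem⟩ := h.exists_mul_reflection_mem_pow hα.1 hw hneg
      exact ih m (hm.trans n.lt_succ_self) (hwα ▸ hmem)

theorem disjoint_stabilizer_positiveRoots [IsAddTorsionFree L] (hv : ∀ α ∈ Φ, v α ≠ 0) :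
    Disjoint (Subgroup.closure (s '' Φ)) (stabilizer (L ≃ₗ[ℤ] L) (positiveRoots Φ v)) := by
  rw [Subgroup.disjoint_def]
  intro g hg hstab
  rw [h.closure_reflections_eq_closure_simpleRoots hv] at hg
  have hinv : ∀ x ∈ s '' simpleRoots Φ s v, x⁻¹ ∈ s '' simpleRoots Φ s v := by
    rintro _ ⟨α, hα, rfl⟩
    exact ⟨α, hα, (h.reflection_inv hα.1.1).symm⟩
  obtain ⟨n, hn⟩ := exists_mem_pow_of_mem_closure hinv hg
  exact h.eq_one_of_mem_pow_of_forall_smul_mem hn fun α hα => hstab ▸ Set.smul_mem_smul_set hα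

end Exchange

theorem existsUnique_eq_mul [IsAddTorsionFree L] {𝕜 : Type*} [CommRing 𝕜] [LinearOrder 𝕜]
    [IsStrictOrderedRing 𝕜] {v : Dual ℤ L →ₗ[ℤ] 𝕜} (h : IsRootDatum Φ coroot s)
    (hv : ∀ α ∈ Φ, v α ≠ 0) {K : Subgroup (L ≃ₗ[ℤ] L)} (hK : K ≤ rootAut Φ coroot)
    (hclosure : Subgroup.closure (s '' Φ) ≤ K) {w : L ≃ₗ[ℤ] L} (hw : w ∈ K) :
    ∃! p : (L ≃ₗ[ℤ] L) × (L ≃ₗ[ℤ] L), p.1 ∈ Subgroup.closure (s '' Φ) ∧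
      p.2 ∈ K ⊓ stabilizer (L ≃ₗ[ℤ] L) (positiveRoots Φ v) ∧ w = p.1 * p.2 := by
  obtain ⟨u, hu, huw⟩ := h.exists_mul_mem_stabilizer_positiveRoots hv (hK hw)
  simpa only [inv_mul_cancel_left] using existsUnique_mul_eq_mul_of_disjoint
    ((h.disjoint_stabilizer_positiveRoots hv).mono_right inf_le_right) (inv_mem hu)
    (Subgroup.mem_inf.mpr ⟨mul_mem (hclosure hu) hw, huw⟩)

end IsRootDatum

section Character

attribute [local instance] arrowAction

variable {L A : Type*} [AddCommGroup L] {Φ : Set (Dual ℤ L)} {coroot : Dual ℤ L → L}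
  {s : Dual ℤ L → (L ≃ₗ[ℤ] L)} {lam : L → A}

theorem mem_rootAut_sep_of_mem_stabilizer [One A] {w : L ≃ₗ[ℤ] L} (hΦ : Φ.Finite)
    (hw : w ∈ rootAut Φ coroot) (hwlam : w ∈ stabilizer (L ≃ₗ[ℤ] L) lam) :
    w ∈ rootAut {α ∈ Φ | lam (coroot α) = 1} coroot := by
  refine mem_rootAut_of_forall (hΦ.sep _) fun β hβ =>
    ⟨⟨smul_mem_of_mem_rootAut hw hβ.1, ?_⟩, coroot_smul hw hβ.1⟩
  have hinv : lam (w (coroot β)) = lam (coroot β) := congrFun (inv_mem hwlam) (coroot β)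
  rw [coroot_smul hw hβ.1, hinv, hβ.2]

variable [Group A] (hlam : ∀ x y, lam (x + y) = lam x * lam y)
include hlam

theorem map_sub_zsmul_of_map_eq_one {c : L} (hc : lam c = 1) (x : L) (k : ℤ) :
    lam (x - k • c) = lam x := by
  let f : Multiplicative L →* A := MonoidHom.mk' (fun y => lam y.toAdd) fun y z => hlam _ _
  change f (.ofAdd x / .ofAdd c ^ k) = f (.ofAdd x)
  rw [map_div, map_zpow, show f (.ofAdd c) = 1 from hc, one_zpow, div_one]

variable (h : IsRootDatum Φ coroot s)
include h

theorem reflection_mem_stabilizer_of_map_eq_one {α : Dual ℤ L} (hα : α ∈ Φ)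
    (hlamα : lam (coroot α) = 1) : s α ∈ stabilizer (L ≃ₗ[ℤ] L) lam := by
  refine mem_stabilizer_iff.mpr (funext fun x => ?_)
  change lam ((s α)⁻¹ x) = lam x
  rw [h.reflection_inv hα, h.reflection_apply α hα, map_sub_zsmul_of_map_eq_one hlam hlamα]

theorem IsRootDatum.sep_map_eq_one : IsRootDatum {α ∈ Φ | lam (coroot α) = 1} coroot s where
  finite := h.finite.sep _
  root_coroot_two α hα := h.root_coroot_two α hα.1
  reflection_apply α hα := h.reflection_apply α hα.1
  reflection_mem_rootAut α hα := mem_rootAut_sep_of_mem_stabilizer h.finite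
    (h.reflection_mem_rootAut α hα.1) (reflection_mem_stabilizer_of_map_eq_one hlam h hα.1 hα.2)

theorem closure_sep_le_closure_inf_stabilizer :
    Subgroup.closure (s '' {α ∈ Φ | lam (coroot α) = 1}) ≤
      Subgroup.closure (s '' Φ) ⊓ stabilizer (L ≃ₗ[ℤ] L) lam := by
  refine le_inf (Subgroup.closure_mono (Set.image_mono (Set.sep_subset _ _))) ?_
  rw [Subgroup.closure_le]
  rintro _ ⟨α, hα, rfl⟩
  exact reflection_mem_stabilizer_of_map_eq_one hlam h hα.1 hα.2

end Character

attribute [local instance] arrowAction in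
theorem stabilizer_semidirect_product_general
    (L : Type*) [AddCommGroup L] [IsAddTorsionFree L]
    (Φ : Set (L →ₗ[ℤ] ℤ)) (hfin : Φ.Finite)
    (coroot : (L →ₗ[ℤ] ℤ) → L)
    (hcoroot : ∀ α ∈ Φ, α (coroot α) = 2)
    (s : (L →ₗ[ℤ] ℤ) → (L ≃ₗ[ℤ] L))
    (hs : ∀ α ∈ Φ, ∀ x : L, s α x = x - α x • coroot α)
    (hmaps : ∀ α ∈ Φ, ∀ β ∈ Φ, β.comp (s α).toLinearMap ∈ Φ)
    (hcorootconj : ∀ α ∈ Φ, ∀ β ∈ Φ,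
      coroot (β.comp ((s α)⁻¹ : L ≃ₗ[ℤ] L).toLinearMap) = s α (coroot β))
    (W : Subgroup (L ≃ₗ[ℤ] L)) (hW : W = Subgroup.closure (s '' Φ))
    {A : Type*} [Group A] (lam : L → A) (hlam : ∀ x y : L, lam (x + y) = lam x * lam y)
    (Wlam : Set (L ≃ₗ[ℤ] L))
    (hWlam : Wlam = {w | w ∈ W ∧ ∀ x : L, lam ((w⁻¹ : L ≃ₗ[ℤ] L) x) = lam x})
    (Φlam0 : Set (L →ₗ[ℤ] ℤ)) (hΦlam0 : Φlam0 = {α ∈ Φ | lam (coroot α) = 1})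
    (Wlam0 : Subgroup (L ≃ₗ[ℤ] L)) (hWlam0 : Wlam0 = Subgroup.closure (s '' Φlam0))
    {𝕜 : Type*} [CommRing 𝕜] [LinearOrder 𝕜] [IsStrictOrderedRing 𝕜]
    (v : (L →ₗ[ℤ] ℤ) →ₗ[ℤ] 𝕜) (hv : ∀ α ∈ Φlam0, v α ≠ 0)
    (Φlam0plus : Set (L →ₗ[ℤ] ℤ)) (hΦlam0plus : Φlam0plus = {α ∈ Φlam0 | 0 < v α})
    (Wlam1 : Set (L ≃ₗ[ℤ] L))
    (hWlam1 : Wlam1 = {w | w ∈ Wlam ∧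
      (fun β : L →ₗ[ℤ] ℤ => β.comp ((w⁻¹ : L ≃ₗ[ℤ] L)).toLinearMap) '' Φlam0plus
        = Φlam0plus}) :
    ((∀ u ∈ Wlam0, u ∈ Wlam) ∧ (∀ w ∈ Wlam, ∀ u ∈ Wlam0, w * u * w⁻¹ ∈ Wlam0)) ∧
    ((1 : L ≃ₗ[ℤ] L) ∈ Wlam1 ∧ (∀ a ∈ Wlam1, ∀ b ∈ Wlam1, a * b ∈ Wlam1) ∧
      (∀ a ∈ Wlam1, a⁻¹ ∈ Wlam1)) ∧
    (∀ x : L ≃ₗ[ℤ] L, x ∈ Wlam0 → x ∈ Wlam1 → x = 1) ∧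
    (∀ w ∈ Wlam, ∃! p : (L ≃ₗ[ℤ] L) × (L ≃ₗ[ℤ] L),
      p.1 ∈ Wlam0 ∧ p.2 ∈ Wlam1 ∧ w = p.1 * p.2) := by
  have h : IsRootDatum Φ coroot s := isRootDatum_of_comp_mem hfin hcoroot hs hmaps hcorootconj
  have h0 : IsRootDatum Φlam0 coroot s := hΦlam0 ▸ h.sep_map_eq_one hlam
  let K : Subgroup (L ≃ₗ[ℤ] L) := W ⊓ stabilizer (L ≃ₗ[ℤ] L) lam
  let K1 : Subgroup (L ≃ₗ[ℤ] L) := K ⊓ stabilizer (L ≃ₗ[ℤ] L) (positiveRoots Φlam0 v)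
  have hWlamK : Wlam = K := by
    rw [hWlam]
    exact Set.ext fun w => and_congr_right fun _ => funext_iff.symm
  have hWlam1K : Wlam1 = K1 := by
    rw [hWlam1, hΦlam0plus, hWlamK]
    rfl
  have hle : Wlam0 ≤ K := by
    simpa only [K, hW, hWlam0, hΦlam0] using closure_sep_le_closure_inf_stabilizer hlam h
  have hK : K ≤ rootAut Φlam0 coroot := fun w hw => hΦlam0 ▸
    mem_rootAut_sep_of_mem_stabilizer hfin (h.closure_reflections_le_rootAut (hW ▸ hw.1)) hw.2
  rw [hWlamK, hWlam1K]
  subst hWlam0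
  exact ⟨⟨hle, Subgroup.le_normalizer_iff.mp (hK.trans h0.rootAut_le_normalizer)⟩,
    ⟨K1.one_mem, fun _ ha _ hb => K1.mul_mem ha hb, fun _ ha => K1.inv_mem ha⟩,
    fun _ hx hx1 => Subgroup.disjoint_def.mp (h0.disjoint_stabilizer_positiveRoots hv) hx hx1.2,
    fun _ hw => h0.existsUnique_eq_mul hv hK hle hw⟩

/- STATEMENT 10: The stabilizer `W_λ` is the semidirect product of `W_λ⁰` by `W_λ¹`:
`W_λ⁰` is a normal subgroup of `W_λ`, `W_λ¹` is a subgroup of `W_λ`,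
`W_λ⁰ ∩ W_λ¹ = {1}`, and every element `w ∈ W_λ` factors uniquely as `w = u·v` with
`u ∈ W_λ⁰` and `v ∈ W_λ¹`.

Here `L` is a free ℤ-module of finite rank, `Φ ⊆ Hom(L, ℤ) \ {0}` is a finite reduced
crystallographic root system with coroots `coroot α ∈ L` satisfying `α (coroot α) = 2`,
reflections `s_α(x) = x - α(x) • α^∨` with `β ∘ s_α ∈ Φ` for all `β ∈ Φ`, and the
coroot of `β ∘ s_α⁻¹` is `s_α (β^∨)`. `W ≤ Aut(L)` is generated by the `s_α`; it acts
on characters `λ : L → ℂˣ` by `(w·λ)(x) = λ(w⁻¹ x)` and on roots by `w·β = β ∘ w⁻¹`.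
`W_λ` is the stabilizer of `λ`, `Φ_λ⁰ := {α ∈ Φ | λ(α^∨) = 1}`,
`W_λ⁰ := ⟨s_α : α ∈ Φ_λ⁰⟩`; a generic `v ∈ L ⊗ ℝ` (encoded, using that `L` is finite
free, as a ℤ-linear functional `v` on `Hom(L, ℤ)` with values in ℝ) with `α(v) ≠ 0`
for all `α ∈ Φ_λ⁰` cuts out `(Φ_λ⁰)⁺ := {α ∈ Φ_λ⁰ | α(v) > 0}`, and
`W_λ¹ := {w ∈ W_λ | w·(Φ_λ⁰)⁺ = (Φ_λ⁰)⁺}`. -/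
theorem stabilizer_semidirect_product
    (L : Type*) [AddCommGroup L] [Module.Free ℤ L] [Module.Finite ℤ L]
    (Φ : Set (L →ₗ[ℤ] ℤ)) (hfin : Φ.Finite) (h0 : (0 : L →ₗ[ℤ] ℤ) ∉ Φ)
    (coroot : (L →ₗ[ℤ] ℤ) → L)
    (hcoroot : ∀ α ∈ Φ, α (coroot α) = 2)
    (s : (L →ₗ[ℤ] ℤ) → (L ≃ₗ[ℤ] L))
    (hs : ∀ α ∈ Φ, ∀ x : L, s α x = x - α x • coroot α)
    (hmaps : ∀ α ∈ Φ, ∀ β ∈ Φ, β.comp (s α).toLinearMap ∈ Φ)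
    (hred : ∀ α ∈ Φ, ∀ t : ℤ, t • α ∈ Φ → t = 1 ∨ t = -1)
    (hcorootconj : ∀ α ∈ Φ, ∀ β ∈ Φ,
      coroot (β.comp ((s α)⁻¹ : L ≃ₗ[ℤ] L).toLinearMap) = s α (coroot β))
    (W : Subgroup (L ≃ₗ[ℤ] L)) (hW : W = Subgroup.closure (s '' Φ))
    (lam : L → ℂˣ) (hlam : ∀ x y : L, lam (x + y) = lam x * lam y)
    (Wlam : Set (L ≃ₗ[ℤ] L))
    (hWlam : Wlam = {w | w ∈ W ∧ ∀ x : L, lam ((w⁻¹ : L ≃ₗ[ℤ] L) x) = lam x})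
    (Φlam0 : Set (L →ₗ[ℤ] ℤ)) (hΦlam0 : Φlam0 = {α ∈ Φ | lam (coroot α) = 1})
    (Wlam0 : Subgroup (L ≃ₗ[ℤ] L)) (hWlam0 : Wlam0 = Subgroup.closure (s '' Φlam0))
    (v : (L →ₗ[ℤ] ℤ) →ₗ[ℤ] ℝ) (hv : ∀ α ∈ Φlam0, v α ≠ 0)
    (Φlam0plus : Set (L →ₗ[ℤ] ℤ)) (hΦlam0plus : Φlam0plus = {α ∈ Φlam0 | 0 < v α})
    (Wlam1 : Set (L ≃ₗ[ℤ] L))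
    (hWlam1 : Wlam1 = {w | w ∈ Wlam ∧
      (fun β : L →ₗ[ℤ] ℤ => β.comp ((w⁻¹ : L ≃ₗ[ℤ] L)).toLinearMap) '' Φlam0plus
        = Φlam0plus}) :
    -- W_λ⁰ is a normal subgroup of W_λ:
    ((∀ u ∈ Wlam0, u ∈ Wlam) ∧ (∀ w ∈ Wlam, ∀ u ∈ Wlam0, w * u * w⁻¹ ∈ Wlam0)) ∧
    -- W_λ¹ is a subgroup of W_λ:
    ((1 : L ≃ₗ[ℤ] L) ∈ Wlam1 ∧ (∀ a ∈ Wlam1, ∀ b ∈ Wlam1, a * b ∈ Wlam1) ∧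
      (∀ a ∈ Wlam1, a⁻¹ ∈ Wlam1)) ∧
    -- W_λ⁰ ∩ W_λ¹ = {1}:
    (∀ x : L ≃ₗ[ℤ] L, x ∈ Wlam0 → x ∈ Wlam1 → x = 1) ∧
    -- unique factorization w = u·v with u ∈ W_λ⁰ and v ∈ W_λ¹:
    (∀ w ∈ Wlam, ∃! p : (L ≃ₗ[ℤ] L) × (L ≃ₗ[ℤ] L),
      p.1 ∈ Wlam0 ∧ p.2 ∈ Wlam1 ∧ w = p.1 * p.2) := by
  have : IsAddTorsionFree L := isTorsionFree_int_iff_isAddTorsionFree.mp inferInstance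
  exact stabilizer_semidirect_product_general L Φ hfin coroot hcoroot s hs hmaps hcorootconj W hW
    lam hlam Wlam hWlam Φlam0 hΦlam0 Wlam0 hWlam0 v hv Φlam0plus hΦlam0plus Wlam1 hWlam1
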